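/- Let p be a prime, k ≥ 1, let F be a finite field of order q = p^k, and set d = gcd(2, q − 1). Let s be a prime such that d·s divides q − 1, and set e = (q − 1)/(d·s). Let M be the image in PSL₂(F) (under the quotient map from SL₂(F)) of the set of upper triangular matrices {(a b; 0 a⁻¹) : a ∈ F^×, a^{d·e} = 1, b ∈ F}. Let ℓ = min{ i ≥ 1 : e divides p^i − 1 } be the multiplicative order of p modulo e (so ℓ divides k). Then k/ℓ ≤ d(M) ≤ k/ℓ + 1. -/

import Mathlib

/-- The minimal number of generators of a group `G`. -/
noncomputable def minGen (G : Type*) [Group G] : ℕ :=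
  sInf {n : ℕ | ∃ S : Finset G, S.card = n ∧ Subgroup.closure (S : Set G) = ⊤}

/-- `PSL₂(F)`: the quotient of `SL₂(F)` by its center. -/
abbrev PSL2 (F : Type*) [Field F] :=
  Matrix.SpecialLinearGroup (Fin 2) F ⧸
    Subgroup.center (Matrix.SpecialLinearGroup (Fin 2) F)

/-!
Write `u x` and `t a` for the classes of `(1 x; 0 1)` and `(a 0; 0 a⁻¹)` in `PSL₂(F)`. Since
`t a * u x = u (a² x) * t a`, the subgroups of `u(F) t(H)` that have the form `u(V) t(H)` come from
the additive subgroups `V` stable under the squares of `H`, and over a finite field these are the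
subspaces of `F` over the subfield `K` generated by those squares. If elements `u (x i) * t (a i)`
generate `u(F) t(H)`, then the `x i` must span `F` over `K`; conversely, a generator of the cyclic
group `t(H)` together with `u` of a `K`-basis of `F` generates. So `d(u(F) t(H))` lies between
`[F : K]` and `[F : K] + 1`.

For `H = {a | a ^ (d * e) = 1}` the squares of `H` are exactly the `e`-th roots of unity, and the
subfield of order `p ^ i` contains them all if and only if `e ∣ p ^ i - 1`; so `K` has order `p ^ ℓ`
and `[F : K] = k / ℓ`.
-/

theorem minGen_eq_rank (G : Type*) [Group G] [Group.FG G] : minGen G = Group.rank G :=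
  le_antisymm (Nat.sInf_le (Group.rank_spec G))
    (le_csInf ⟨_, Group.rank_spec G⟩ fun _ ⟨_, hcard, hS⟩ ↦ hcard ▸ Group.rank_le hS)

theorem mul_mem_of_mem_subfieldClosure {F : Type*} [Field F] {S : Set F} {A : AddSubgroup F}
    [Finite A] (hS : ∀ c ∈ S, ∀ x ∈ A, c * x ∈ A) {c : F} (hc : c ∈ Subfield.closure S) :
    ∀ x ∈ A, c * x ∈ A := by
  induction hc using Subfield.closure_induction with
  | mem c hc => exact hS c hc
  | one => simp
  | add c c' _ _ hc hc' => exact fun x hx ↦ add_mul c c' x ▸ A.add_mem (hc x hx) (hc' x hx)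
  | neg c _ hc => exact fun x hx ↦ neg_mul c x ▸ A.neg_mem (hc x hx)
  | mul c c' _ _ hc hc' => exact fun x hx ↦ mul_assoc c c' x ▸ hc _ (hc' x hx)
  | inv c _ hc =>
    rcases eq_or_ne c 0 with rfl | hc0
    · simp
    have hinj : Function.Injective fun x : A ↦ (⟨c * x, hc x x.2⟩ : A) := fun x y hxy ↦
      Subtype.ext (mul_left_cancel₀ hc0 (congrArg Subtype.val hxy))
    intro x hx
    obtain ⟨y, hy⟩ := Finite.surjective_of_injective hinj ⟨x, hx⟩
    obtain rfl : c * y = x := congrArg Subtype.val hy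
    simp [hc0]

section CyclicGroup

variable {C : Type*} [CommGroup C] [Finite C] [IsCyclic C] {d e m : ℕ}

theorem range_powMonoidHom_eq_ker (h : d * e = Nat.card C) :
    (powMonoidHom d : C →* C).range = (powMonoidHom e).ker := by
  have hd : 0 < d := Nat.pos_of_ne_zero fun hd ↦ Nat.card_pos.ne (by rw [← h, hd, zero_mul])
  refine Subgroup.eq_of_le_of_card_ge ?_ ?_
  · rintro _ ⟨y, rfl⟩
    rw [MonoidHom.mem_ker, powMonoidHom_apply, powMonoidHom_apply, ← pow_mul, h, pow_card_eq_one']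
  · rw [IsCyclic.card_powMonoidHom_ker, IsCyclic.card_powMonoidHom_range, ← h,
      Nat.gcd_mul_left_left, Nat.gcd_mul_right_left, Nat.mul_div_cancel_left e hd]

theorem map_powMonoidHom_ker (h : m.gcd (Nat.card C) * e ∣ Nat.card C) :
    (powMonoidHom (m.gcd (Nat.card C) * e) : C →* C).ker.map (powMonoidHom m) =
      (powMonoidHom e).ker := by
  set d := m.gcd (Nat.card C) with hd
  refine le_antisymm ?_ fun x hx ↦ ?_
  · rintro _ ⟨a, ha : a ^ (d * e) = 1, rfl⟩
    obtain ⟨c, hc⟩ : d ∣ m := Nat.gcd_dvd_left m _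
    change (a ^ m) ^ e = 1
    rw [← pow_mul, hc, mul_right_comm, pow_mul, ha, one_pow]
  · obtain ⟨s, hs⟩ := h
    obtain ⟨y, rfl⟩ := (range_powMonoidHom_eq_ker (by rw [hs]; ring : d * s * e = _)).ge hx
    -- By Bézout `y ^ d` is an `m`-th power, namely of `y ^ u`.
    have hbezout : (y ^ m.gcdA (Nat.card C)) ^ m = y ^ d := by
      rw [← zpow_natCast y d, hd, Nat.gcd_eq_gcd_ab, zpow_add, zpow_mul y (Nat.card C : ℤ),
        zpow_natCast y (Nat.card C), pow_card_eq_one', one_zpow, mul_one, mul_comm, zpow_mul,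
        zpow_natCast]
    refine ⟨(y ^ m.gcdA (Nat.card C)) ^ s, ?_, ?_⟩
    · change ((y ^ m.gcdA (Nat.card C)) ^ s) ^ (d * e) = 1
      rw [← pow_mul, show s * (d * e) = Nat.card C by rw [hs]; ring, pow_card_eq_one']
    · change ((y ^ m.gcdA (Nat.card C)) ^ s) ^ m = y ^ (d * s)
      rw [pow_right_comm, hbezout, pow_mul]

end CyclicGroup

section FiniteField

variable {F : Type*} [Field F] {e : ℕ}

/-- The subfield of `F` generated by the `e`-th roots of unity in `F`. -/
def cyclotomicSubfield (e : ℕ) (F : Type*) [Field F] : Subfield F :=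
  Subfield.closure (Units.val '' (rootsOfUnity e F : Set Fˣ))

theorem natCard_cyclotomicSubfield_sub_one_dvd [Finite F] {p i : ℕ} [Fact p.Prime] [CharP F p]
    (h : e ∣ p ^ i - 1) : Nat.card (cyclotomicSubfield e F) - 1 ∣ p ^ i - 1 := by
  have hpi : p ^ i - 1 + 1 = p ^ i := Nat.sub_add_cancel (Nat.one_le_pow _ _ (NeZero.pos p))
  have hroot : Set.EqOn (iterateFrobenius F p i) (RingHom.id F)
      (Units.val '' (rootsOfUnity e F : Set Fˣ)) := by
    rintro _ ⟨a, ha, rfl⟩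
    have ha' : (a : F) ^ (p ^ i - 1) = 1 :=
      orderOf_dvd_iff_pow_eq_one.1 ((orderOf_dvd_of_pow_eq_one
        ((mem_rootsOfUnity' e a).1 ha)).trans h)
    rw [iterateFrobenius_def, ← hpi, pow_succ, ha', one_mul, RingHom.id_apply]
  have hfix := RingHom.eqOn_field_closure hroot
  have := Fintype.ofFinite (cyclotomicSubfield e F)
  rw [Nat.card_eq_fintype_card, ← FiniteField.forall_pow_eq_one_iff]
  intro x
  have hx : x ^ (p ^ i - 1 + 1) = x := by
    rw [hpi]
    exact Units.ext (Subtype.ext (hfix (x : cyclotomicSubfield e F).2))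
  rwa [pow_succ, mul_eq_right] at hx

theorem dvd_natCard_cyclotomicSubfield_sub_one [Finite F] (he : e ∣ Nat.card F - 1) :
    e ∣ Nat.card (cyclotomicSubfield e F) - 1 := by
  let f := Units.map (cyclotomicSubfield e F).subtype.toMonoidHom
  have hle : rootsOfUnity e F ≤ f.range := fun a ha ↦
    ⟨Units.mk0 ⟨a, Subfield.subset_closure ⟨a, ha, rfl⟩⟩
      fun h ↦ a.ne_zero (congrArg Subtype.val h), Units.ext rfl⟩
  calc e = Nat.card (rootsOfUnity e F) := by
        rw [rootsOfUnity_eq_ker, IsCyclic.card_powMonoidHom_ker, Nat.card_units,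
          Nat.gcd_eq_right he]
    _ ∣ Nat.card f.range := Subgroup.card_dvd_of_le hle
    _ ∣ Nat.card (cyclotomicSubfield e F)ˣ := Subgroup.card_range_dvd f
    _ = Nat.card (cyclotomicSubfield e F) - 1 := Nat.card_units _

theorem finrank_cyclotomicSubfield {p k : ℕ} (hp : p.Prime) [Fintype F]
    (hF : Fintype.card F = p ^ k) (he : e ∣ p ^ k - 1) :
    Module.finrank (cyclotomicSubfield e F) F = k / sInf {i : ℕ | 1 ≤ i ∧ e ∣ p ^ i - 1} := by
  have : Fact p.Prime := ⟨hp⟩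
  have : CharP F p := charP_of_card_eq_prime_pow hF
  have hcard : p ^ k = Nat.card (cyclotomicSubfield e F) ^
      Module.finrank (cyclotomicSubfield e F) F := by
    rw [← hF, ← Nat.card_eq_fintype_card]
    exact Module.natCard_eq_pow_finrank
  obtain ⟨m, -, hm⟩ := (Nat.dvd_prime_pow hp).1
    (hcard ▸ dvd_pow_self _ Module.finrank_pos.ne')
  have hkm : k = m * Module.finrank (cyclotomicSubfield e F) F := by
    rw [hm, ← pow_mul] at hcard
    exact Nat.pow_right_injective hp.two_le hcard
  have hm0 : 1 ≤ m := Nat.pos_of_ne_zero fun h ↦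
    Finite.one_lt_card.ne' (hm.trans (by rw [h, pow_zero]))
  have hleast : IsLeast {i : ℕ | 1 ≤ i ∧ e ∣ p ^ i - 1} m := by
    refine ⟨⟨hm0, hm ▸ dvd_natCard_cyclotomicSubfield_sub_one ?_⟩, fun i ⟨hi, hei⟩ ↦ ?_⟩
    · rwa [Nat.card_eq_fintype_card, hF]
    · have hpi : 1 < p ^ i := Nat.one_lt_pow (by lia) hp.one_lt
      have hdvd : p ^ m - 1 ∣ p ^ i - 1 := hm ▸ natCard_cyclotomicSubfield_sub_one_dvd hei
      have hle := Nat.le_of_dvd (by lia) hdvd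
      exact (Nat.pow_le_pow_iff_right hp.one_lt).1 (by lia)
  rw [hleast.csInf_eq]
  exact (Nat.div_eq_of_eq_mul_right hm0 hkm).symm

end FiniteField

namespace PSL2

variable {F : Type*} [Field F]

/-- The matrix `(1 x; 0 1) (a 0; 0 a⁻¹)` of `SL₂(F)`. In the coordinates `(x, a)` the multiplication
of the Borel subgroup is that of the semidirect product with `a` acting on `F` as `a ^ 2`. -/
def upperTriangular (x : F) (a : Fˣ) : Matrix.SpecialLinearGroup (Fin 2) F :=
  ⟨!![(a : F), x * (a : F)⁻¹; 0, (a : F)⁻¹], by simp⟩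

theorem coe_upperTriangular (x : F) (a : Fˣ) :
    (upperTriangular x a : Matrix (Fin 2) (Fin 2) F) =
      !![(a : F), x * (a : F)⁻¹; 0, (a : F)⁻¹] :=
  rfl

theorem upperTriangular_mul (x y : F) (a b : Fˣ) :
    upperTriangular x a * upperTriangular y b =
      upperTriangular (x + (a : F) ^ 2 * y) (a * b) := by
  have hentry : (a : F) * (y * (b : F)⁻¹) + x * (a : F)⁻¹ * (b : F)⁻¹ =
      (x + (a : F) ^ 2 * y) * ((a : F) * b)⁻¹ := by
    field_simp
    ring
  refine Subtype.ext ?_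
  simp [coe_upperTriangular, hentry, mul_comm (b : F)⁻¹]

/-- The homomorphism `x ↦ (1 x; 0 1)` from the additive group of `F` to `PSL₂(F)`. -/
def unipotent : Multiplicative F →* PSL2 F :=
  (QuotientGroup.mk' _).comp <| .mk' (fun x ↦ upperTriangular x.toAdd 1) fun x y ↦ by
    simp [upperTriangular_mul]

/-- The homomorphism `a ↦ (a 0; 0 a⁻¹)` from the multiplicative group of `F` to `PSL₂(F)`. -/
def torus : Fˣ →* PSL2 F :=
  (QuotientGroup.mk' _).comp <| .mk' (upperTriangular 0) fun a b ↦ by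
    simp [upperTriangular_mul]

theorem unipotent_mul_torus (x : F) (a : Fˣ) :
    unipotent (.ofAdd x) * torus a = QuotientGroup.mk (upperTriangular x a) := by
  simp [unipotent, torus, ← QuotientGroup.mk_mul, upperTriangular_mul]

theorem torus_mul_unipotent (a : Fˣ) (x : F) :
    torus a * unipotent (.ofAdd x) = unipotent (.ofAdd ((a : F) ^ 2 * x)) * torus a := by
  simp [unipotent, torus, ← QuotientGroup.mk_mul, upperTriangular_mul]

theorem eq_of_unipotent_mul_torus_eq_unipotent {x y : F} {a : Fˣ}
    (h : unipotent (.ofAdd x) * torus a = unipotent (.ofAdd y)) : x = y := by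
  rw [unipotent_mul_torus] at h
  change QuotientGroup.mk (upperTriangular x a) = QuotientGroup.mk (upperTriangular y 1) at h
  obtain ⟨r, -, hr⟩ := Matrix.SpecialLinearGroup.mem_center_iff.1 (QuotientGroup.eq.1 h)
  have hentry : 0 = (a : F)⁻¹ * y - x * (a : F)⁻¹ := by
    simpa [coe_upperTriangular, Matrix.SpecialLinearGroup.coe_inv, Matrix.adjugate_fin_two_of,
      ← sub_eq_add_neg] using congrFun₂ hr 0 1
  exact mul_left_cancel₀ (inv_ne_zero a.ne_zero) (by linear_combination hentry)

/-- The subfield of `F` generated by the squares of the elements of `H`; over it the subspaces of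
`F` are stable under the action of `H` by conjugation on the unipotent matrices. -/
def squareField (H : Subgroup Fˣ) : Subfield F :=
  Subfield.closure (Units.val '' (H.map (powMonoidHom 2) : Set Fˣ))

theorem sq_mem_squareField {H : Subgroup Fˣ} {a : Fˣ} (ha : a ∈ H) :
    (a : F) ^ 2 ∈ squareField H :=
  Subfield.subset_closure ⟨a ^ 2, ⟨a, ha, rfl⟩, Units.val_pow_eq_pow_val a 2⟩

/-- The subgroup of the classes of `(1 x; 0 1) (a 0; 0 a⁻¹)` with `x ∈ V` and `a ∈ H`. -/
def borelSubgroup (H : Subgroup Fˣ) (V : Submodule (squareField H) F) : Subgroup (PSL2 F) :=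
  V.toAddSubgroup.toSubgroup.map unipotent ⊔ H.map torus

theorem mem_borelSubgroup {H : Subgroup Fˣ} {V : Submodule (squareField H) F} {g : PSL2 F} :
    g ∈ borelSubgroup H V ↔ ∃ x ∈ V, ∃ a ∈ H, unipotent (.ofAdd x) * torus a = g := by
  have hnorm : H.map torus ≤
      Subgroup.normalizer (V.toAddSubgroup.toSubgroup.map unipotent : Subgroup (PSL2 F)) := by
    rw [Subgroup.le_normalizer_iff]
    rintro _ ⟨a, ha, rfl⟩ _ ⟨x, hx, rfl⟩
    refine ⟨.ofAdd ((a : F) ^ 2 * x.toAdd), V.smul_mem ⟨_, sq_mem_squareField ha⟩ hx, ?_⟩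
    exact eq_mul_inv_of_mul_eq (torus_mul_unipotent a x.toAdd).symm
  rw [borelSubgroup, ← SetLike.mem_coe, Subgroup.coe_mul_of_right_le_normalizer_left _ _ hnorm,
    Set.mem_mul]
  constructor
  · rintro ⟨_, ⟨x, hx, rfl⟩, _, ⟨a, ha, rfl⟩, rfl⟩
    exact ⟨x.toAdd, hx, a, ha, rfl⟩
  · rintro ⟨x, hx, a, ha, rfl⟩
    exact ⟨_, ⟨.ofAdd x, hx, rfl⟩, _, ⟨a, ha, rfl⟩, rfl⟩

theorem mem_borelSubgroup_rootsOfUnity_top {n : ℕ} {g : PSL2 F} :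
    g ∈ borelSubgroup (rootsOfUnity n F) ⊤ ↔
      ∃ (a b : F), a ≠ 0 ∧ a ^ n = 1 ∧ ∃ A : Matrix.SpecialLinearGroup (Fin 2) F,
        (A : Matrix (Fin 2) (Fin 2) F) = !![a, b; 0, a⁻¹] ∧ g = QuotientGroup.mk A := by
  rw [mem_borelSubgroup]
  constructor
  · rintro ⟨x, -, a, ha, rfl⟩
    exact ⟨a, x * (a : F)⁻¹, a.ne_zero, (mem_rootsOfUnity' n a).1 ha, upperTriangular x a, rfl,
      unipotent_mul_torus x a⟩
  · rintro ⟨a, b, ha, han, A, hA, rfl⟩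
    refine ⟨b * a, trivial, Units.mk0 a ha, (mem_rootsOfUnity' n _).2 han, ?_⟩
    rw [unipotent_mul_torus]
    exact congrArg QuotientGroup.mk (Subtype.ext (by simp [coe_upperTriangular, hA, ha]))

theorem finrank_squareField_le_rank_borelSubgroup (H : Subgroup Fˣ)
    [Group.FG (borelSubgroup H ⊤)] :
    Module.finrank (squareField H) F ≤ Group.rank (borelSubgroup H ⊤) := by
  classical
  obtain ⟨T, hcard, hT⟩ := Group.rank_spec (borelSubgroup H ⊤)
  choose x _ a ha hxa using fun g : borelSubgroup H ⊤ ↦ mem_borelSubgroup.1 g.2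
  set V := Submodule.span (squareField H) (T.image x : Set F)
  have hle : Subgroup.closure (T : Set (borelSubgroup H ⊤)) ≤
      (borelSubgroup H V).subgroupOf (borelSubgroup H ⊤) :=
    (Subgroup.closure_le _).2 fun g hg ↦ mem_borelSubgroup.2
      ⟨x g, Submodule.subset_span (Finset.mem_image_of_mem x hg), a g, ha g, hxa g⟩
  rw [hT, top_le_iff, Subgroup.subgroupOf_eq_top] at hle
  have hspan : V = ⊤ := eq_top_iff.2 fun y _ ↦ by
    obtain ⟨z, hz, b, -, hzb⟩ := mem_borelSubgroup.1
      (hle (mem_borelSubgroup.2 ⟨y, trivial, 1, H.one_mem, by rw [map_one, mul_one]⟩))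
    exact eq_of_unipotent_mul_torus_eq_unipotent hzb ▸ hz
  calc Module.finrank (squareField H) F
    _ = Module.finrank (squareField H) V := by rw [hspan, finrank_top]
    _ ≤ (T.image x).card := finrank_span_finset_le_card _
    _ ≤ Group.rank (borelSubgroup H ⊤) := Finset.card_image_le.trans_eq hcard

/-- The subspace of those `x` for which `(1 x; 0 1)` lies in a given group containing the torus
elements of `H`. It is stable under scalars because that group is stable under conjugation by
these elements. -/
def unipotentPart [Finite F] {H : Subgroup Fˣ} (G : Subgroup (PSL2 F)) (hG : H.map torus ≤ G) :
    Submodule (squareField H) F where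
  __ := (G.comap unipotent).toAddSubgroup'
  smul_mem' c x hx := by
    refine mul_mem_of_mem_subfieldClosure (A := (G.comap unipotent).toAddSubgroup') ?_ c.2 x hx
    rintro _ ⟨_, ⟨a, ha, rfl⟩, rfl⟩ y hy
    have hta : torus a ∈ G := hG ⟨a, ha, rfl⟩
    have hconj : unipotent (.ofAdd ((a : F) ^ 2 * y)) =
        torus a * unipotent (.ofAdd y) * (torus a)⁻¹ :=
      eq_mul_inv_of_mul_eq (torus_mul_unipotent a y).symm
    exact Subgroup.mem_comap.2 (hconj ▸ G.mul_mem (G.mul_mem hta hy) (G.inv_mem hta))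

theorem rank_borelSubgroup_le_finrank_squareField_add_one [Finite F] (H : Subgroup Fˣ) :
    Group.rank (borelSubgroup H ⊤) ≤ Module.finrank (squareField H) F + 1 := by
  classical
  obtain ⟨ζ, hζ⟩ := H.isCyclic_iff_exists_zpowers_eq_top.1 inferInstance
  let B := Module.finBasis (squareField H) F
  let S : Finset (PSL2 F) :=
    insert (torus ζ) (Finset.univ.image fun i ↦ unipotent (.ofAdd (B i)))
  have hS : ∀ i, unipotent (.ofAdd (B i)) ∈ S := fun i ↦
    Finset.mem_insert_of_mem (Finset.mem_image_of_mem _ (Finset.mem_univ i))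
  have htorus : H.map torus ≤ Subgroup.closure (S : Set (PSL2 F)) := by
    rw [← hζ, MonoidHom.map_zpowers, Subgroup.zpowers_le]
    exact Subgroup.subset_closure (Finset.mem_insert_self _ _)
  have hunipotent : unipotentPart _ htorus = ⊤ := by
    rw [eq_top_iff, ← B.span_eq, Submodule.span_le]
    rintro _ ⟨i, rfl⟩
    exact Subgroup.subset_closure (hS i)
  have hle : borelSubgroup H ⊤ ≤ Subgroup.closure (S : Set (PSL2 F)) := by
    refine sup_le ?_ htorus
    rintro _ ⟨x, -, rfl⟩
    exact (hunipotent ▸ trivial : x.toAdd ∈ unipotentPart _ htorus)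
  have hge : Subgroup.closure (S : Set (PSL2 F)) ≤ borelSubgroup H ⊤ := by
    rw [Subgroup.closure_le, Finset.coe_insert, Set.insert_subset_iff]
    refine ⟨Subgroup.mem_sup_right ⟨ζ, hζ ▸ Subgroup.mem_zpowers ζ, rfl⟩, fun g hg ↦ ?_⟩
    obtain ⟨i, -, rfl⟩ := Finset.mem_image.1 hg
    exact Subgroup.mem_sup_left ⟨_, trivial, rfl⟩
  calc Group.rank (borelSubgroup H ⊤)
    _ = Group.rank (Subgroup.closure (S : Set (PSL2 F))) := Subgroup.rank_congr (hle.antisymm hge)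
    _ ≤ S.card := Subgroup.rank_closure_finset_le_card S
    _ ≤ Module.finrank (squareField H) F + 1 := by
      refine (Finset.card_insert_le _ _).trans (Nat.succ_le_succ ?_)
      simpa using Finset.card_image_le (s := Finset.univ) (f := fun i ↦ unipotent (.ofAdd (B i)))

theorem squareField_rootsOfUnity [Finite F] {e : ℕ}
    (he : Nat.gcd 2 (Nat.card F - 1) * e ∣ Nat.card F - 1) :
    squareField (rootsOfUnity (Nat.gcd 2 (Nat.card F - 1) * e) F) = cyclotomicSubfield e F := by
  rw [← Nat.card_units] at he ⊢
  rw [squareField, cyclotomicSubfield, rootsOfUnity_eq_ker, rootsOfUnity_eq_ker,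
    map_powMonoidHom_ker he]

end PSL2

open PSL2 in
theorem borel_index_s_subgroup_generation_general
    (p k : ℕ) (hp : p.Prime)
    (F : Type*) [Field F] [Fintype F] (hF : Fintype.card F = p ^ k)
    (d : ℕ) (hd : d = Nat.gcd 2 (p ^ k - 1))
    (s : ℕ) (hds : d * s ∣ p ^ k - 1)
    (e : ℕ) (he : e = (p ^ k - 1) / (d * s))
    (M : Subgroup (PSL2 F))
    (hM : ∀ x : PSL2 F, x ∈ M ↔
      ∃ (a b : F), a ≠ 0 ∧ a ^ (d * e) = 1 ∧
        ∃ g : Matrix.SpecialLinearGroup (Fin 2) F,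
          (g : Matrix (Fin 2) (Fin 2) F) = !![a, b; 0, a⁻¹] ∧
          x = QuotientGroup.mk g)
    (ℓ : ℕ) (hℓ : ℓ = sInf {i : ℕ | 1 ≤ i ∧ e ∣ p ^ i - 1}) :
    k / ℓ ≤ minGen ↥M ∧ minGen ↥M ≤ k / ℓ + 1 := by
  obtain rfl : M = borelSubgroup (rootsOfUnity (d * e) F) ⊤ :=
    SetLike.ext fun x ↦ (hM x).trans mem_borelSubgroup_rootsOfUnity_top.symm
  have hde : d * e ∣ p ^ k - 1 :=
    ⟨s, by rw [mul_right_comm, he, Nat.mul_div_cancel' hds]⟩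
  have hfinrank : Module.finrank (squareField (rootsOfUnity (d * e) F)) F = k / ℓ := by
    rw [hℓ, ← finrank_cyclotomicSubfield hp hF (dvd_of_mul_left_dvd hde)]
    subst hd
    rw [← hF, ← Nat.card_eq_fintype_card] at hde ⊢
    rw [squareField_rootsOfUnity hde]
  rw [minGen_eq_rank, ← hfinrank]
  exact ⟨finrank_squareField_le_rank_borelSubgroup _,
    rank_borelSubgroup_le_finrank_squareField_add_one _⟩

/-- Let `F` be a field of order `q = p^k` (`p` prime), `d = gcd(2, q - 1)`, `s` a
prime with `d·s ∣ q - 1`, and `e = (q - 1)/(d·s)`.  Let `M ≤ PSL₂(F)` be the image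
of the upper triangular matrices `(a b; 0 a⁻¹)` with `a^{d·e} = 1`, and let
`ℓ = min {i ≥ 1 : e ∣ p^i - 1}` be the multiplicative order of `p` modulo `e`.
Then `k/ℓ ≤ d(M) ≤ k/ℓ + 1`. -/
theorem borel_index_s_subgroup_generation
    (p k : ℕ) (hp : p.Prime) (hk : 1 ≤ k)
    (F : Type) [Field F] [Fintype F] (hF : Fintype.card F = p ^ k)
    (d : ℕ) (hd : d = Nat.gcd 2 (p ^ k - 1))
    (s : ℕ) (hs : s.Prime) (hds : d * s ∣ p ^ k - 1)
    (e : ℕ) (he : e = (p ^ k - 1) / (d * s))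
    (M : Subgroup (PSL2 F))
    (hM : ∀ x : PSL2 F, x ∈ M ↔
      ∃ (a b : F), a ≠ 0 ∧ a ^ (d * e) = 1 ∧
        ∃ g : Matrix.SpecialLinearGroup (Fin 2) F,
          (g : Matrix (Fin 2) (Fin 2) F) = !![a, b; 0, a⁻¹] ∧
          x = QuotientGroup.mk g)
    (ℓ : ℕ) (hℓ : ℓ = sInf {i : ℕ | 1 ≤ i ∧ e ∣ p ^ i - 1}) :
    k / ℓ ≤ minGen ↥M ∧ minGen ↥M ≤ k / ℓ + 1 :=
  borel_index_s_subgroup_generation_general p k hp F hF d hd s hds e he M hM ℓ hℓ
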